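/- arXiv:2206.03204 — 2 statements merged into one kernel-verified Lean document; each statement's English description precedes it below -/
import Mathlib

section
/- Let p_1, …, p_n be vectors in ℝ^d (d ≥ 1) and let Z = Σ_{i=1}^n [0, p_i] be the zonotope they generate. Then the d-dimensional Lebesgue volume of Z equals the sum over all d-element index sets 1 ≤ i_1 < i_2 < … < i_d ≤ n of |det[p_{i_1}, p_{i_2}, …, p_{i_d}]|, the absolute value of the determinant of the d×d matrix with these columns. -/
open scoped Pointwise
open MeasureTheory

/-!
Adding a generator `w ≠ 0` to a compact convex set `K` increases its Haar measure by the measure of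
the projection of `K` along `w`, because every nonempty fibre of that projection is lengthened by
one copy of `w`. Applied to a zonotope and, in one dimension less, to its projection, this shows by
induction that the measure of a zonotope is the sum of the measures of its sub-zonotopes on
`dim E` generators: those on fewer generators are null, so for them the increase is the whole
measure. A sub-zonotope on `dim E` generators is a parallelepiped, whose measure is the absolute
value of a determinant.
-/

open Module

theorem sum_powersetCard_succ_insert {ι M : Type*} [DecidableEq ι] [AddCommMonoid M]
    {a : ι} {s : Finset ι} (ha : a ∉ s) (k : ℕ) (f : Finset ι → M) :
    ∑ S ∈ (insert a s).powersetCard (k + 1), f S =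
      ∑ S ∈ s.powersetCard (k + 1), f S + ∑ S ∈ s.powersetCard k, f (insert a S) := by
  have notMem {m : ℕ} {S : Finset ι} (hS : S ∈ s.powersetCard m) : a ∉ S :=
    fun h => ha ((Finset.mem_powersetCard.mp hS).1 h)
  have hdisj : Disjoint (s.powersetCard (k + 1)) ((s.powersetCard k).image (insert a)) := by
    refine Finset.disjoint_right.mpr fun S hS hS' => ?_
    obtain ⟨T, -, rfl⟩ := Finset.mem_image.mp hS
    exact notMem hS' (Finset.mem_insert_self a T)
  rw [Finset.powersetCard_succ_insert ha, Finset.sum_union hdisj, Finset.sum_image]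
  intro S hS T hT hST
  rw [← Finset.erase_insert (notMem hS), hST, Finset.erase_insert (notMem hT)]

section Zonotope

variable {ι E : Type*} [AddCommGroup E] [Module ℝ E]

/-- The zonotope generated by the vectors `v i` with `i ∈ s`, as the Minkowski sum of the segments
`[0, v i]`. The finite set `s` is kept separate from the family `v` so that sub-zonotopes are
obtained by shrinking `s`. -/
def zonotope (s : Finset ι) (v : ι → E) : Set E :=
  ∑ i ∈ s, segment ℝ 0 (v i)

theorem zonotope_insert [DecidableEq ι] {a : ι} {s : Finset ι} (ha : a ∉ s) (v : ι → E) :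
    zonotope (insert a s) v = segment ℝ 0 (v a) + zonotope s v :=
  Finset.sum_insert ha

theorem zonotope_insert_of_eq_zero [DecidableEq ι] {a : ι} {s : Finset ι} {v : ι → E}
    (hv : v a = 0) : zonotope (insert a s) v = zonotope s v :=
  Finset.sum_insert_of_eq_zero_if_notMem fun _ => by rw [hv, segment_same, Set.singleton_zero]

theorem zonotope_of_subsingleton [Subsingleton E] (s : Finset ι) (v : ι → E) :
    zonotope s v = 0 :=
  Finset.sum_eq_zero fun i _ => by
    rw [Subsingleton.elim (v i) 0, segment_same, Set.singleton_zero]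

theorem zonotope_map_univ {κ : Type*} [Fintype κ] (e : κ ↪ ι) (v : ι → E) :
    zonotope (Finset.univ.map e) v = parallelepiped (v ∘ e) := by
  rw [zonotope, Finset.sum_map, parallelepiped_eq_sum_segment]
  rfl

theorem image_segment_zero {F : Type*} [AddCommGroup F] [Module ℝ F] (f : E →ₗ[ℝ] F) (x : E) :
    f '' segment ℝ 0 x = segment ℝ 0 (f x) := by
  simpa using image_segment ℝ f.toAffineMap 0 x

theorem image_zonotope {F : Type*} [AddCommGroup F] [Module ℝ F] (f : E →ₗ[ℝ] F)
    (s : Finset ι) (v : ι → E) : f '' zonotope s v = zonotope s (f ∘ v) := by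
  simp only [zonotope, Set.image_finsetSum, image_segment_zero, Function.comp_apply]

theorem convex_zonotope (s : Finset ι) (v : ι → E) : Convex ℝ (zonotope s v) :=
  convex_sum _ fun _ _ => convex_segment _ _

theorem isCompact_zonotope [TopologicalSpace E] [ContinuousAdd E] [ContinuousSMul ℝ E]
    (s : Finset ι) (v : ι → E) : IsCompact (zonotope s v) :=
  Finset.sum_induction _ IsCompact (fun _ _ => IsCompact.add) isCompact_singleton fun i _ => by
    rw [segment_eq_image]
    exact isCompact_Icc.image (by fun_prop)

theorem zonotope_subset_span (s : Finset ι) (v : ι → E) :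
    zonotope s v ⊆ Submodule.span ℝ (v '' s) := by
  intro x hx
  obtain ⟨g, hg, rfl⟩ := Set.mem_finsetSum s _ x |>.mp hx
  refine Submodule.sum_mem _ fun i hi => ?_
  exact (Submodule.span ℝ (v '' s)).convex.segment_subset (zero_mem _)
    (Submodule.subset_span (Set.mem_image_of_mem v hi)) (hg hi)

end Zonotope

section Thickening

theorem volume_Icc_add {a b : ℝ} (hab : a ≤ b) {I : Set ℝ} (hI : IsCompact I)
    (hconv : Convex ℝ I) (hne : I.Nonempty) :
    volume (Set.Icc a b + I) = ENNReal.ofReal (b - a) + volume I := by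
  have hle : sInf I ≤ sSup I := Real.sInf_le_sSup I hI.bddBelow hI.bddAbove
  rw [eq_Icc_of_connected_compact ⟨hne, hconv.isPreconnected⟩ hI, Set.Icc_add_Icc hab hle,
    Real.volume_Icc, Real.volume_Icc, ← ENNReal.ofReal_add (sub_nonneg.mpr hab)
    (sub_nonneg.mpr hle), add_sub_add_comm]

theorem segment_zero_prodMk_zero {F : Type*} [AddCommGroup F] [Module ℝ F] :
    segment ℝ 0 ((1 : ℝ), (0 : F)) = Set.Icc 0 1 ×ˢ {0} := by
  ext ⟨t, y⟩
  simp [segment_eq_image, eq_comm]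

theorem volume_prod_segment_add {F : Type*} [AddCommGroup F] [Module ℝ F] [TopologicalSpace F]
    [T2Space F] [ContinuousAdd F] [MeasurableSpace F] [OpensMeasurableSpace F]
    (ν : Measure F) [SFinite ν] {K : Set (ℝ × F)} (hK : IsCompact K) (hconv : Convex ℝ K) :
    (volume.prod ν) (segment ℝ 0 (1, 0) + K) = (volume.prod ν) K + ν (Prod.snd '' K) := by
  have hproj : MeasurableSet (Prod.snd '' K) := (hK.image continuous_snd).measurableSet
  have hthick : IsCompact (segment ℝ 0 ((1 : ℝ), (0 : F)) + K) := by
    rw [segment_zero_prodMk_zero]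
    exact (isCompact_Icc.prod isCompact_singleton).add hK
  have hslice (y : F) : (·, y) ⁻¹' (segment ℝ 0 ((1 : ℝ), (0 : F)) + K) =
      Set.Icc 0 1 + (·, y) ⁻¹' K := by
    ext x
    simp [segment_zero_prodMk_zero, Set.mem_add]
  rw [Measure.prod_apply_symm hthick.measurableSet, Measure.prod_apply_symm hK.measurableSet,
    ← lintegral_indicator_one hproj, ← lintegral_add_right _ (measurable_one.indicator hproj)]
  congr 1 with y
  rw [hslice]
  by_cases hy : y ∈ Prod.snd '' K
  · have hne : ((·, y) ⁻¹' K : Set ℝ).Nonempty := by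
      obtain ⟨⟨x, _⟩, hx, rfl⟩ := hy
      exact ⟨x, hx⟩
    have hcomp : IsCompact ((·, y) ⁻¹' K : Set ℝ) :=
      (hK.image continuous_fst).of_isClosed_subset (hK.isClosed.preimage (by fun_prop))
        fun x hx => ⟨(x, y), hx, rfl⟩
    have hcv : Convex ℝ ((·, y) ⁻¹' K : Set ℝ) :=
      hconv.affine_preimage ((AffineMap.id ℝ ℝ).prod (AffineMap.const ℝ ℝ y))
    rw [volume_Icc_add zero_le_one hcomp hcv hne, Set.indicator_of_mem hy, sub_zero,
      ENNReal.ofReal_one, Pi.one_apply, add_comm]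
  · have hempty : ((·, y) ⁻¹' K : Set ℝ) = ∅ :=
      Set.eq_empty_of_forall_notMem fun x hx => hy ⟨(x, y), hx, rfl⟩
    rw [hempty, Set.add_empty, measure_empty, Set.indicator_of_notMem hy, add_zero]

theorem exists_isAddHaarMeasure_eq_prod {G H : Type*}
    [AddGroup G] [TopologicalSpace G] [IsTopologicalAddGroup G] [LocallyCompactSpace G]
    [SecondCountableTopology G] [MeasurableSpace G] [BorelSpace G]
    [AddGroup H] [TopologicalSpace H] [IsTopologicalAddGroup H] [LocallyCompactSpace H]
    [SecondCountableTopology H] [MeasurableSpace H] [BorelSpace H]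
    (ρ : Measure (G × H)) [ρ.IsAddHaarMeasure] (μ : Measure G) [μ.IsAddHaarMeasure] :
    ∃ ν : Measure H, ν.IsAddHaarMeasure ∧ ρ = μ.prod ν := by
  let c := Measure.addHaarScalarFactor ρ (μ.prod Measure.addHaar)
  have hc : c ≠ 0 := (Measure.addHaarScalarFactor_pos_of_isAddHaarMeasure _ _).ne'
  refine ⟨c • Measure.addHaar, .nnreal_smul _ hc, ?_⟩
  rw [Measure.prod_smul_right]
  exact Measure.isAddLeftInvariant_eq_smul ρ (μ.prod Measure.addHaar)

theorem exists_continuousLinearEquiv_prod_apply_eq {R V : Type*} [Field R] [TopologicalSpace R]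
    [IsTopologicalRing R] [AddCommGroup V] [TopologicalSpace V] [IsTopologicalAddGroup V]
    [Module R V] [ContinuousSMul R V] [SeparatingDual R V] {w : V} (hw : w ≠ 0) :
    ∃ (F : Submodule R V) (e : V ≃L[R] R × F), e w = (1, 0) := by
  obtain ⟨f, hf⟩ := SeparatingDual.exists_eq_one (R := R) hw
  refine ⟨f.ker, .equivOfRightInverse f (.toSpanSingleton R w) fun t => by simp [hf], ?_⟩
  ext <;> simp [hf]

end Thickening

section Haar

variable {ι E : Type*} [NormedAddCommGroup E] [NormedSpace ℝ E] [FiniteDimensional ℝ E]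
  [MeasurableSpace E] [BorelSpace E] (μ : Measure E) [μ.IsAddHaarMeasure]

theorem exists_addHaar_segment_add_eq {w : E} (hw : w ≠ 0) :
    ∃ (F : Submodule ℝ E) (π : E →L[ℝ] F) (ν : Measure F),
      finrank ℝ E = finrank ℝ F + 1 ∧ ν.IsAddHaarMeasure ∧
        ∀ K : Set E, IsCompact K → Convex ℝ K →
          μ (segment ℝ 0 w + K) = μ K + ν (π '' K) := by
  obtain ⟨F, e, he⟩ := exists_continuousLinearEquiv_prod_apply_eq (R := ℝ) hw
  obtain ⟨ν, hν, hprod⟩ := exists_isAddHaarMeasure_eq_prod (μ.map e) volume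
  have hmap (A : Set E) : μ A = (volume.prod ν) (e '' A) := by
    have hemb : MeasurableEmbedding e := e.toHomeomorph.measurableEmbedding
    rw [← hprod, hemb.map_apply, e.injective.preimage_image]
  refine ⟨F, (.snd ℝ ℝ F) ∘L e.toContinuousLinearMap, ν, ?_, hν, fun K hK hconv => ?_⟩
  · simp [e.toLinearEquiv.finrank_eq, add_comm]
  have hsegment : e '' (segment ℝ 0 w + K) = segment ℝ 0 (1, 0) + e '' K := by
    rw [Set.image_add, ← he]
    exact congrArg (· + e '' K) (image_segment_zero e.toLinearMap w)
  rw [hmap, hmap, hsegment, volume_prod_segment_add ν (hK.image e.continuous)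
    (hconv.linear_image e.toLinearMap), Set.image_image]
  rfl

theorem addHaar_zonotope_eq_zero {s : Finset ι} (hs : s.card < finrank ℝ E) (v : ι → E) :
    μ (zonotope s v) = 0 := by
  classical
  refine measure_mono_null (zonotope_subset_span s v) (Measure.addHaar_submodule μ _ fun htop => ?_)
  have hle : finrank ℝ (Submodule.span ℝ (v '' s)) ≤ s.card := by
    rw [← Finset.coe_image]
    exact (finrank_span_finset_le_card (s.image v)).trans Finset.card_image_le
  rw [htop, finrank_top] at hle
  exact hle.not_gt hs

theorem exists_addHaar_zonotope_insert_eq [DecidableEq ι] {a : ι} {v : ι → E} (hv : v a ≠ 0) :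
    ∃ (F : Submodule ℝ E) (π : E →ₗ[ℝ] F) (ν : Measure F),
      finrank ℝ E = finrank ℝ F + 1 ∧ ν.IsAddHaarMeasure ∧
        ∀ S : Finset ι, a ∉ S →
          μ (zonotope (insert a S) v) = μ (zonotope S v) + ν (zonotope S (π ∘ v)) := by
  obtain ⟨F, π, ν, hF, hν, hthick⟩ := exists_addHaar_segment_add_eq μ hv
  refine ⟨F, π, ν, hF, hν, fun S hS => ?_⟩
  rw [zonotope_insert hS, hthick _ (isCompact_zonotope S v) (convex_zonotope S v),
    ← image_zonotope π.toLinearMap]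
  rfl

theorem addHaar_zonotope_eq_sum_powersetCard (s : Finset ι) (v : ι → E) :
    μ (zonotope s v) = ∑ S ∈ s.powersetCard (finrank ℝ E), μ (zonotope S v) := by
  classical
  generalize hd : finrank ℝ E = d
  induction d generalizing E s with
  | zero =>
    have := finrank_zero_iff.mp hd
    simp [zonotope_of_subsingleton]
  | succ d ih =>
    induction s using Finset.induction_on with
    | empty =>
      rw [addHaar_zonotope_eq_zero μ (by simp [hd]),
        Finset.powersetCard_eq_empty.mpr d.succ_pos, Finset.sum_empty]
    | insert a s ha ih_insert =>
      have hnull {S : Finset ι} (hS : S ∈ s.powersetCard d) : μ (zonotope S v) = 0 :=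
        addHaar_zonotope_eq_zero μ (by rw [(Finset.mem_powersetCard.mp hS).2, hd]; lia) v
      rw [sum_powersetCard_succ_insert ha, ← ih_insert]
      by_cases hv : v a = 0
      · simp only [zonotope_insert_of_eq_zero hv]
        rw [Finset.sum_eq_zero fun S hS => hnull hS, add_zero]
      · obtain ⟨F, π, ν, hF, hν, hinsert⟩ := exists_addHaar_zonotope_insert_eq μ hv
        rw [hinsert s ha, ih ν s (π ∘ v) (by lia)]
        refine congrArg _ (Finset.sum_congr rfl fun S hS => ?_)
        rw [hinsert S fun h => ha ((Finset.mem_powersetCard.mp hS).1 h), hnull hS, zero_add]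

theorem addHaar_parallelepiped_eq_abs_det_mul {κ : Type*} [Fintype κ] [DecidableEq κ]
    (b : Basis κ ℝ E) (v : κ → E) :
    μ (parallelepiped v) = ENNReal.ofReal |b.det v| * μ (parallelepiped b) := by
  have hv : b.constr ℝ v ∘ b = v := funext (b.constr_basis ℝ v)
  have hdet : b.det v = (b.constr ℝ v).det := by
    conv_lhs => rw [← hv, b.det_comp, b.det_self, mul_one]
  rw [hdet, ← Measure.addHaar_image_linearMap, image_parallelepiped, hv]

theorem volume_zonotope_eq_sum_abs_det_general [LinearOrder ι] {d : ℕ} (b : Basis (Fin d) ℝ E)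
    (s : Finset ι) (v : ι → E) :
    μ (∑ i ∈ s, segment ℝ 0 (v i)) =
      ∑ S ∈ (s.powersetCard d).attach,
        ENNReal.ofReal |b.det fun j => v (S.1.orderEmbOfFin (Finset.mem_powersetCard.mp S.2).2 j)| *
          μ (parallelepiped b) := by
  have hd : finrank ℝ E = d := by rw [finrank_eq_card_basis b, Fintype.card_fin]
  rw [← zonotope, addHaar_zonotope_eq_sum_powersetCard, hd, ← Finset.sum_attach]
  refine Finset.sum_congr rfl fun S _ => ?_
  have hS := (Finset.mem_powersetCard.mp S.2).2
  conv_lhs => rw [← S.1.map_orderEmbOfFin_univ hS, zonotope_map_univ,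
    addHaar_parallelepiped_eq_abs_det_mul μ b]
  rfl

end Haar

/-- The volume of the zonotope `Z = ∑ᵢ [0, pᵢ]` in `ℝ^d` equals the sum,
over all `d`-element index sets `i₁ < i₂ < … < i_d`, of the absolute value of the determinant
of the `d × d` matrix whose columns are `p_{i₁}, …, p_{i_d}`. -/
theorem volume_zonotope_eq_sum_abs_det (d n : ℕ) (hd : 1 ≤ d)
    (p : Fin n → EuclideanSpace ℝ (Fin d)) :
    (volume (∑ i : Fin n, segment ℝ (0 : EuclideanSpace ℝ (Fin d)) (p i))).toReal =
      ∑ S ∈ ((Finset.univ : Finset (Fin n)).powersetCard d).attach,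
        |Matrix.det (Matrix.of fun i j : Fin d =>
          p (S.1.orderEmbOfFin ((Finset.mem_powersetCard.mp S.2).2) j) i)| := by
  let b := EuclideanSpace.basisFun (Fin d) ℝ
  have hdet (q : Fin d → EuclideanSpace ℝ (Fin d)) :
      b.toBasis.det q = (Matrix.of fun i j => q j i).det := rfl
  rw [volume_zonotope_eq_sum_abs_det_general volume b.toBasis, b.coe_toBasis,
    b.volume_parallelepiped, ENNReal.toReal_sum fun _ _ => by finiteness]
  simp only [mul_one, ENNReal.toReal_ofReal (abs_nonneg _), hdet]
end

section
/- Let 2 ≤ d ≤ n and let p_1, …, p_n ∈ ℝ^d generate the zonotope Z = Σ_{i=1}^n [0, p_i]. If Z is contained in a translate of the closed Euclidean unit ball (equivalently, the circumradius of Z, which equals (1/2)·max_{u ∈ S^{d−1}} Σ_{i=1}^n |⟨u, p_i⟩|, is at most 1), then Σ_{i=1}^n |p_i| ≤ (d κ_d / κ_{d−1}) · ( 1 − π²/(24 n²) + π⁴/(1920 n⁴) ). Equivalently, 1 − V_1(Z)/V_1(B^d) ≥ π²/(24 n²) − π⁴/(1920 n⁴). -/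
open scoped Pointwise
open MeasureTheory

/-!
The width function `w ↦ ∑ i, |⟪w, p i⟫|` of the zonotope is at most `2 ‖w‖`. On a great circle it is
a sum of `n` terms `|r sin (θ - φ)|`, whose zeros cut a half-turn into `n` arcs. On an arc of length
`x` the integral equals `2 sin (x / 2)` times the value at the midpoint, so by concavity of the sine
the integral over the half-turn is largest for arcs of equal length, which is the case of the
regular `2n`-gon. Averaging this bound over all rotations of the circle turns the left-hand side
into a multiple of `∑ i, ‖p i‖`; the constant is found by comparing the uniform distribution on the
sphere with the uniform distribution on the ball, where the averages are elementary integrals.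
Finally the sine is replaced by its Taylor polynomial of degree five.
-/

section Sine

theorem nonneg_of_hasDerivAt_nonneg {f f' : ℝ → ℝ} (h0 : f 0 = 0)
    (hf : ∀ x, HasDerivAt f (f' x) x) (hf' : ∀ x, 0 ≤ x → 0 ≤ f' x) {x : ℝ} (hx : 0 ≤ x) :
    0 ≤ f x := by
  have hmono : MonotoneOn f (Set.Ici 0) :=
    monotoneOn_of_hasDerivWithinAt_nonneg (convex_Ici 0)
      (fun y _ => (hf y).continuousAt.continuousWithinAt)
      (fun y _ => (hf y).hasDerivWithinAt) fun y hy => hf' y (interior_subset hy)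
  exact h0 ▸ hmono Set.self_mem_Ici hx hx

theorem cos_le_one_sub_sq_add_quartic {x : ℝ} (hx : 0 ≤ x) :
    Real.cos x ≤ 1 - x ^ 2 / 2 + x ^ 4 / 24 := by
  have hderiv (y : ℝ) : HasDerivAt (fun x => 1 - x ^ 2 / 2 + x ^ 4 / 24 - Real.cos x)
      (Real.sin y - (y - y ^ 3 / 6)) y := by
    convert! ((((hasDerivAt_pow 2 y).div_const 2).const_sub 1).add
      ((hasDerivAt_pow 4 y).div_const 24)).sub (Real.hasDerivAt_cos y) using 1
    norm_num
    ring
  exact sub_nonneg.1 <| nonneg_of_hasDerivAt_nonneg (by simp) hderiv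
    (fun y hy => sub_nonneg.2 (Real.sin_ge_sub_cube hy)) hx

theorem sin_le_sub_cube_add_quintic {x : ℝ} (hx : 0 ≤ x) :
    Real.sin x ≤ x - x ^ 3 / 6 + x ^ 5 / 120 := by
  have hderiv (y : ℝ) : HasDerivAt (fun x => x - x ^ 3 / 6 + x ^ 5 / 120 - Real.sin x)
      (1 - y ^ 2 / 2 + y ^ 4 / 24 - Real.cos y) y := by
    convert! (((hasDerivAt_id y).sub ((hasDerivAt_pow 3 y).div_const 6)).add
      ((hasDerivAt_pow 5 y).div_const 120)).sub (Real.hasDerivAt_sin y) using 1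
    norm_num
    ring
  exact sub_nonneg.1 <| nonneg_of_hasDerivAt_nonneg (by simp) hderiv
    (fun y hy => sub_nonneg.2 (cos_le_one_sub_sq_add_quartic hy)) hx

theorem two_mul_div_pi_mul_sin_le {x : ℝ} (hx : 0 < x) :
    2 * x / Real.pi * Real.sin (Real.pi / (2 * x)) ≤
      1 - Real.pi ^ 2 / (24 * x ^ 2) + Real.pi ^ 4 / (1920 * x ^ 4) := by
  calc 2 * x / Real.pi * Real.sin (Real.pi / (2 * x))
      ≤ 2 * x / Real.pi * (Real.pi / (2 * x) - (Real.pi / (2 * x)) ^ 3 / 6 +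
          (Real.pi / (2 * x)) ^ 5 / 120) := by
        gcongr
        exact sin_le_sub_cube_add_quintic (by positivity)
    _ = 1 - Real.pi ^ 2 / (24 * x ^ 2) + Real.pi ^ 4 / (1920 * x ^ 4) := by
        field_simp
        ring

theorem concaveOn_mul_sin_half {M : ℝ} (hM : 0 ≤ M) :
    ConcaveOn ℝ (Set.Icc 0 Real.pi) fun x => M * Real.sin (x / 2) := by
  refine ⟨convex_Icc _ _, fun x hx y hy a b ha hb hab => ?_⟩
  have hhalf {z : ℝ} (hz : z ∈ Set.Icc 0 Real.pi) : z / 2 ∈ Set.Icc 0 Real.pi :=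
    ⟨by linarith [hz.1], by linarith [hz.1, hz.2]⟩
  have h := mul_le_mul_of_nonneg_left
    (strictConcaveOn_sin_Icc.concaveOn.2 (hhalf hx) (hhalf hy) ha hb hab) hM
  simp only [smul_eq_mul] at h ⊢
  convert h using 1
  · ring
  · ring_nf

theorem integral_sin_sub (φ s t : ℝ) :
    ∫ θ in s..t, Real.sin (θ - φ) =
      2 * Real.sin ((t - s) / 2) * Real.sin ((s + t) / 2 - φ) := by
  rw [intervalIntegral.integral_comp_sub_right Real.sin, integral_sin, Real.cos_sub_cos,
    show (s - φ - (t - φ)) / 2 = -((t - s) / 2) by ring, Real.sin_neg,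
    show (s - φ + (t - φ)) / 2 = (s + t) / 2 - φ by ring]
  ring

theorem integral_abs_sin_sub {φ s t : ℝ} (hs : φ ≤ s) (hst : s ≤ t) (ht : t ≤ φ + Real.pi) :
    ∫ θ in s..t, |Real.sin (θ - φ)| =
      2 * Real.sin ((t - s) / 2) * |Real.sin ((s + t) / 2 - φ)| := by
  have habs {θ : ℝ} (h : θ ∈ Set.Icc s t) : |Real.sin (θ - φ)| = Real.sin (θ - φ) :=
    abs_of_nonneg <| Real.sin_nonneg_of_mem_Icc ⟨by linarith [h.1], by linarith [h.2]⟩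
  rw [habs ⟨by linarith, by linarith⟩, ← integral_sin_sub]
  exact intervalIntegral.integral_congr fun θ hθ => habs (Set.uIcc_of_le hst ▸ hθ)

theorem exists_cos_add_sin_eq_mul_sin_sub (α β : ℝ) :
    ∃ r φ : ℝ, ∀ θ, α * Real.cos θ + β * Real.sin θ = r * Real.sin (θ - φ) := by
  refine ⟨‖(⟨β, -α⟩ : ℂ)‖, Complex.arg ⟨β, -α⟩, fun θ => ?_⟩
  have hre := Complex.norm_mul_cos_arg ⟨β, -α⟩
  have him := Complex.norm_mul_sin_arg ⟨β, -α⟩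
  rw [Real.sin_sub]
  linear_combination -Real.sin θ * hre + Real.cos θ * him

theorem abs_sin_sub_toIcoMod (θ a φ : ℝ) :
    |Real.sin (θ - toIcoMod Real.pi_pos a φ)| = |Real.sin (θ - φ)| := by
  rw [toIcoMod, zsmul_eq_mul, sub_sub_eq_add_sub, add_sub_right_comm, Real.sin_add_int_mul_pi,
    abs_mul, abs_zpow, abs_neg, abs_one, one_zpow, one_mul]

end Sine

section Zonogon

theorem mul_add_le_add_one_mul_of_concaveOn {h : ℝ → ℝ} {L m x y : ℝ}
    (hh : ConcaveOn ℝ (Set.Icc 0 L) h) (hm : 1 ≤ m) (hx : 0 ≤ x) (hy : 0 ≤ y) (hxy : x + y ≤ L) :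
    m * h (x / m) + h y ≤ (m + 1) * h ((x + y) / (m + 1)) := by
  have := one_pos.trans_le hm
  have hxm : x / m ∈ Set.Icc 0 L :=
    ⟨by positivity, (div_le_self hx hm).trans (by linarith)⟩
  have hconc := hh.2 hxm (⟨hy, by linarith⟩ : y ∈ Set.Icc 0 L)
    (show 0 ≤ m / (m + 1) by positivity) (show 0 ≤ 1 / (m + 1) by positivity) (by field_simp)
  simp only [smul_eq_mul] at hconc
  calc m * h (x / m) + h y = (m + 1) * (m / (m + 1) * h (x / m) + 1 / (m + 1) * h y) := by
        field_simp
    _ ≤ (m + 1) * h (m / (m + 1) * (x / m) + 1 / (m + 1) * y) := by gcongr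
    _ = (m + 1) * h ((x + y) / (m + 1)) := by congr 2; field_simp

theorem integral_le_card_mul_of_concaveOn {ι : Type*} (S : Finset ι) (z : ι → ℝ) {g h : ℝ → ℝ}
    {a b : ℝ} (hab : a ≤ b) (hg : IntervalIntegrable g volume a b)
    (hh : ConcaveOn ℝ (Set.Icc 0 (b - a)) h) (hz : ∀ i ∈ S, z i ∈ Set.Icc a b)
    (hpiece : ∀ s t, a ≤ s → s ≤ t → t ≤ b → (∀ i ∈ S, z i ≤ s ∨ t ≤ z i) →
      ∫ θ in s..t, g θ ≤ h (t - s)) :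
    ∫ θ in a..b, g θ ≤ (S.card + 1) * h ((b - a) / (S.card + 1)) := by
  classical
  induction S using Finset.induction_on_max_value z generalizing b with
  | empty => simpa using hpiece a b le_rfl hab le_rfl (by simp)
  | insert j S hj hmax ih =>
    obtain ⟨haz, hzb⟩ := hz j (Finset.mem_insert_self j S)
    have hleft : ∫ θ in a..z j, g θ ≤ (S.card + 1) * h ((z j - a) / (S.card + 1)) := by
      refine ih haz (hg.mono_set ?_) (hh.subset ?_ (convex_Icc _ _))
        (fun i hi => ⟨(hz i (Finset.mem_insert_of_mem hi)).1, hmax i hi⟩)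
        fun s t has hst htz hS => hpiece s t has hst (htz.trans hzb) ?_
      · rw [Set.uIcc_of_le haz, Set.uIcc_of_le hab]
        exact Set.Icc_subset_Icc_right hzb
      · exact Set.Icc_subset_Icc_right (by linarith)
      · exact Finset.forall_mem_insert _ _ _ |>.2 ⟨Or.inr htz, hS⟩
    have hright : ∫ θ in z j..b, g θ ≤ h (b - z j) :=
      hpiece (z j) b haz hzb le_rfl <| Finset.forall_mem_insert _ _ _ |>.2
        ⟨Or.inl le_rfl, fun i hi => Or.inl (hmax i hi)⟩
    have hsplit : ∫ θ in a..b, g θ = (∫ θ in a..z j, g θ) + ∫ θ in z j..b, g θ := by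
      refine (intervalIntegral.integral_add_adjacent_intervals (hg.mono_set ?_)
        (hg.mono_set ?_)).symm
      · rw [Set.uIcc_of_le haz, Set.uIcc_of_le hab]
        exact Set.Icc_subset_Icc_right hzb
      · rw [Set.uIcc_of_le hzb, Set.uIcc_of_le hab]
        exact Set.Icc_subset_Icc_left haz
    set m : ℝ := S.card + 1 with hm
    have hm1 : 1 ≤ m := by simp [hm]
    rw [Finset.card_insert_of_notMem hj, Nat.cast_succ, ← hm]
    calc ∫ θ in a..b, g θ ≤ m * h ((z j - a) / m) + h (b - z j) := by linarith
      _ ≤ (m + 1) * h ((z j - a + (b - z j)) / (m + 1)) :=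
          mul_add_le_add_one_mul_of_concaveOn hh hm1 (by linarith) (by linarith) (by linarith)
      _ = (m + 1) * h ((b - a) / (m + 1)) := by ring_nf

variable {ι : Type*} [Fintype ι]

theorem integral_sum_abs_mul_sin_sub_eq_of_piece (r : ι → ℝ) {ψ : ι → ℝ} {a s t : ℝ}
    (hψ : ∀ i, ψ i ∈ Set.Icc a (a + Real.pi)) (has : a ≤ s) (hst : s ≤ t)
    (hta : t ≤ a + Real.pi) (hpiece : ∀ i, ψ i ≤ s ∨ t ≤ ψ i) :
    ∫ θ in s..t, ∑ i, |r i * Real.sin (θ - ψ i)| =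
      2 * Real.sin ((t - s) / 2) * ∑ i, |r i * Real.sin ((s + t) / 2 - ψ i)| := by
  have hterm (i : ι) : ∫ θ in s..t, |Real.sin (θ - ψ i)| =
      2 * Real.sin ((t - s) / 2) * |Real.sin ((s + t) / 2 - ψ i)| := by
    rcases hpiece i with h | h
    · exact integral_abs_sin_sub h hst (by linarith [(hψ i).1])
    · have := integral_abs_sin_sub (φ := ψ i - Real.pi) (by linarith [(hψ i).2]) hst (by linarith)
      simpa only [← sub_add, Real.sin_add_pi, abs_neg] using this
  rw [intervalIntegral.integral_finsetSum
    fun i _ => (by fun_prop : Continuous _).intervalIntegrable _ _, Finset.mul_sum]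
  refine Finset.sum_congr rfl fun i _ => ?_
  simp_rw [abs_mul, intervalIntegral.integral_const_mul, hterm]
  ring

theorem integral_sum_abs_mul_sin_sub_le [Nonempty ι] (r φ : ι → ℝ) {M : ℝ}
    (hM : ∀ θ, ∑ i, |r i * Real.sin (θ - φ i)| ≤ M) :
    ∫ θ in 0..Real.pi, ∑ i, |r i * Real.sin (θ - φ i)| ≤
      2 * Fintype.card ι * Real.sin (Real.pi / (2 * Fintype.card ι)) * M := by
  classical
  obtain ⟨j⟩ := ‹Nonempty ι›
  set a := φ j
  have hper : Function.Periodic (fun θ => ∑ i, |r i * Real.sin (θ - φ i)|) Real.pi := fun θ => by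
    simp only [add_sub_right_comm, Real.sin_add_pi, mul_neg, abs_neg]
  have hshift := hper.intervalIntegral_add_eq 0 a
  rw [zero_add] at hshift
  rw [hshift]
  set ψ : ι → ℝ := fun i => toIcoMod Real.pi_pos a (φ i)
  have hψ (i : ι) : ψ i ∈ Set.Icc a (a + Real.pi) :=
    Set.Ico_subset_Icc_self (toIcoMod_mem_Ico _ _ _)
  have hψj : ψ j = a := toIcoMod_apply_left _ _
  simp_rw [abs_mul, ← abs_sin_sub_toIcoMod _ a (φ _), ← abs_mul] at hM ⊢
  have hM0 : 0 ≤ M := (Finset.sum_nonneg fun i _ => abs_nonneg _).trans (hM 0)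
  have hcard : (((Finset.univ.erase j).card : ℕ) : ℝ) + 1 = Fintype.card ι := by
    exact_mod_cast Finset.card_erase_add_one (Finset.mem_univ j)
  have key := integral_le_card_mul_of_concaveOn (Finset.univ.erase j) ψ
    (a := a) (b := a + Real.pi) (g := fun θ => ∑ i, |r i * Real.sin (θ - ψ i)|)
    (h := fun x => 2 * M * Real.sin (x / 2)) (by linarith [Real.pi_pos])
    ((by fun_prop : Continuous _).intervalIntegrable _ _)
    (by simpa only [add_sub_cancel_left] using concaveOn_mul_sin_half (mul_nonneg zero_le_two hM0))
    (fun i _ => hψ i) fun s t has hst hta hS => by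
      have hpiece (i : ι) : ψ i ≤ s ∨ t ≤ ψ i := by
        rcases eq_or_ne i j with rfl | hij
        · exact Or.inl (hψj.trans_le has)
        · exact hS i (Finset.mem_erase.2 ⟨hij, Finset.mem_univ i⟩)
      have hsin : 0 ≤ Real.sin ((t - s) / 2) :=
        Real.sin_nonneg_of_nonneg_of_le_pi (by linarith) (by linarith)
      rw [integral_sum_abs_mul_sin_sub_eq_of_piece r hψ has hst hta hpiece]
      linarith [mul_le_mul_of_nonneg_left (hM ((s + t) / 2)) hsin]
  rw [hcard, add_sub_cancel_left] at key
  refine key.trans_eq ?_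
  rw [div_div, mul_comm (Fintype.card ι : ℝ) 2]
  ring

variable {E : Type*} [NormedAddCommGroup E] [InnerProductSpace ℝ E]

theorem norm_cos_smul_add_sin_smul {x y : E} (hx : ‖x‖ = 1) (hy : ‖y‖ = 1)
    (hxy : inner ℝ x y = 0) (θ : ℝ) : ‖Real.cos θ • x + Real.sin θ • y‖ = 1 := by
  rw [← sq_eq_sq₀ (norm_nonneg _) zero_le_one, norm_add_sq_real]
  simp only [real_inner_smul_left, real_inner_smul_right, hxy, norm_smul, hx, hy, mul_zero,
    add_zero, mul_one, Real.norm_eq_abs, sq_abs, Real.cos_sq_add_sin_sq, one_pow]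

theorem integral_sum_abs_inner_circle_le [Nonempty ι] {p : ι → E} {M : ℝ}
    (hp : ∀ w : E, ∑ i, |inner ℝ w (p i)| ≤ M * ‖w‖) {x y : E} (hx : ‖x‖ = 1) (hy : ‖y‖ = 1)
    (hxy : inner ℝ x y = 0) :
    ∫ θ in 0..Real.pi, ∑ i, |inner ℝ (Real.cos θ • x + Real.sin θ • y) (p i)| ≤
      2 * Fintype.card ι * Real.sin (Real.pi / (2 * Fintype.card ι)) * M := by
  choose r φ hrφ using fun i =>
    exists_cos_add_sin_eq_mul_sin_sub (inner ℝ x (p i)) (inner ℝ y (p i))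
  have hinner (θ : ℝ) (i : ι) : inner ℝ (Real.cos θ • x + Real.sin θ • y) (p i) =
      r i * Real.sin (θ - φ i) := by
    rw [← hrφ, inner_add_left, real_inner_smul_left, real_inner_smul_left]
    ring
  simp_rw [hinner]
  refine integral_sum_abs_mul_sin_sub_le r φ fun θ => ?_
  simpa only [hinner, norm_cos_smul_add_sin_smul hx hy hxy, mul_one] using
    hp (Real.cos θ • x + Real.sin θ • y)

end Zonogon

section Ball

theorem setIntegral_abs_sq_le (c : ℝ) : ∫ t in {t : ℝ | t ^ 2 ≤ c}, |t| = max c 0 := by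
  rcases lt_or_ge c 0 with hc | hc
  · have hempty : {t : ℝ | t ^ 2 ≤ c} = ∅ :=
      Set.eq_empty_of_forall_notMem fun t => not_le.2 (hc.trans_le (sq_nonneg t))
    rw [max_eq_right hc.le, hempty, setIntegral_empty]
  · have hIcc : {t : ℝ | t ^ 2 ≤ c} = Set.Icc (-√c) √c := Set.ext fun t => Real.sq_le hc
    have hnonneg : ∫ t in 0..√c, |t| = c / 2 := by
      rw [intervalIntegral.integral_congr fun t ht => abs_of_nonneg
        (Set.uIcc_of_le (Real.sqrt_nonneg c) ▸ ht).1, integral_id, Real.sq_sqrt hc]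
      ring
    have hneg : ∫ t in (-√c)..0, |t| = c / 2 := by
      simpa only [abs_neg, neg_zero, hnonneg] using
        (intervalIntegral.integral_comp_neg (a := 0) (b := √c) fun t => |t|).symm
    rw [max_eq_left hc, hIcc, integral_Icc_eq_integral_Ioc,
      ← intervalIntegral.integral_of_le (by linarith [Real.sqrt_nonneg c]),
      ← intervalIntegral.integral_add_adjacent_intervals (b := 0)
        (continuous_abs.intervalIntegrable _ _) (continuous_abs.intervalIntegrable _ _),
      hnonneg, hneg]
    ring

theorem setIntegral_closedBall_norm_pow {V : Type*} [NormedAddCommGroup V] [NormedSpace ℝ V]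
    [FiniteDimensional ℝ V] [Nontrivial V] [MeasurableSpace V] [BorelSpace V] (μ : Measure V)
    [μ.IsAddHaarMeasure] (k : ℕ) :
    ∫ z in Metric.closedBall (0 : V) 1, ‖z‖ ^ k ∂μ =
      Module.finrank ℝ V / (Module.finrank ℝ V + k) * μ.real (Metric.closedBall 0 1) := by
  set d := Module.finrank ℝ V
  have hd : 0 < d := Module.finrank_pos
  have hradial : ∫ y in Set.Ioi (0 : ℝ), y ^ (d - 1) • (Set.Iic 1).indicator (· ^ k) y =
      1 / (d + k) := by
    have hpow (y : ℝ) : y ^ (d - 1) • (Set.Iic 1).indicator (· ^ k) y =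
        (Set.Iic 1).indicator (· ^ (d - 1 + k)) y := by
      simpa only [pow_add, smul_eq_mul] using
        (Set.indicator_mul_right (Set.Iic (1 : ℝ)) (· ^ (d - 1)) (· ^ k)).symm
    simp_rw [hpow]
    rw [setIntegral_indicator measurableSet_Iic, Set.Ioi_inter_Iic,
      ← intervalIntegral.integral_of_le zero_le_one, integral_pow, one_pow,
      zero_pow (Nat.succ_ne_zero _), sub_zero, ← Nat.cast_succ,
      show (d - 1 + k).succ = d + k by omega, Nat.cast_add]
  have hindicator (z : V) : (Metric.closedBall (0 : V) 1).indicator (‖·‖ ^ k) z =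
      (Set.Iic 1).indicator (· ^ k) ‖z‖ := by
    simp [Set.indicator]
  rw [← integral_indicator measurableSet_closedBall]
  simp_rw [hindicator]
  rw [integral_fun_norm_addHaar, hradial, nsmul_eq_mul, smul_eq_mul, measureReal_def,
    measureReal_def, Measure.addHaar_closedBall_eq_addHaar_ball]
  ring

variable {V : Type*} [NormedAddCommGroup V] [InnerProductSpace ℝ V] [FiniteDimensional ℝ V]
    [MeasurableSpace V] [BorelSpace V]

theorem integral_max_one_sub_norm_sq [Nontrivial V] :
    ∫ y : V, max (1 - ‖y‖ ^ 2) 0 =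
      2 / (Module.finrank ℝ V + 2) * volume.real (Metric.closedBall (0 : V) 1) := by
  have hindicator (y : V) : max (1 - ‖y‖ ^ 2) 0 =
      (Metric.closedBall (0 : V) 1).indicator (fun y => 1 - ‖y‖ ^ 2) y := by
    by_cases hy : ‖y‖ ≤ 1
    · rw [Set.indicator_of_mem (mem_closedBall_zero_iff.2 hy),
        max_eq_left (sub_nonneg.2 (pow_le_one₀ (norm_nonneg y) hy))]
    · rw [Set.indicator_of_notMem (mt mem_closedBall_zero_iff.1 hy),
        max_eq_right (sub_nonpos.2 (one_le_pow₀ (not_le.1 hy).le))]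
  simp_rw [hindicator]
  have hcompact := isCompact_closedBall (0 : V) 1
  rw [integral_indicator measurableSet_closedBall,
    integral_sub (continuous_const.continuousOn.integrableOn_compact hcompact)
      ((by fun_prop : Continuous _).continuousOn.integrableOn_compact hcompact),
    setIntegral_closedBall_norm_pow, setIntegral_const, smul_eq_mul]
  push_cast
  field_simp
  ring

theorem setIntegral_closedBall_abs_snd [Nontrivial V] :
    ∫ z in Metric.closedBall (0 : WithLp 2 (V × ℝ)) 1, |z.snd| =
      2 / (Module.finrank ℝ V + 2) * volume.real (Metric.closedBall (0 : V) 1) := by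
  have hball : (WithLp.toLp 2 : V × ℝ → _) ⁻¹' Metric.closedBall (0 : WithLp 2 (V × ℝ)) 1 =
      {x | x.2 ^ 2 ≤ 1 - ‖x.1‖ ^ 2} := by
    ext x
    rw [Set.mem_preimage, mem_closedBall_zero_iff, ← sq_le_one_iff₀ (norm_nonneg _),
      WithLp.prod_norm_sq_eq_of_L2]
    simp [le_sub_iff_add_le']
  have hcompact : IsCompact {x : V × ℝ | x.2 ^ 2 ≤ 1 - ‖x.1‖ ^ 2} :=
    hball ▸ (WithLp.homeomorphProd 2 V ℝ).symm.isCompact_preimage.2 (isCompact_closedBall _ _)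
  have hslice (y : V) : ∫ t, {x : V × ℝ | x.2 ^ 2 ≤ 1 - ‖x.1‖ ^ 2}.indicator (|·.2|) (y, t) =
      max (1 - ‖y‖ ^ 2) 0 := by
    rw [← setIntegral_abs_sq_le,
      ← integral_indicator (measurableSet_le (by fun_prop) (by fun_prop))]
    rfl
  have hint : IntegrableOn (|·.2|) {x : V × ℝ | x.2 ^ 2 ≤ 1 - ‖x.1‖ ^ 2} :=
    (by fun_prop : Continuous _).continuousOn.integrableOn_compact hcompact
  rw [← (WithLp.volume_preserving_toLp V ℝ).setIntegral_preimage_emb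
    (MeasurableEquiv.toLp 2 (V × ℝ)).measurableEmbedding, hball,
    ← integral_indicator hcompact.measurableSet, Measure.volume_eq_prod]
  refine (integral_prod _ ((integrable_indicator_iff hcompact.measurableSet).2 hint)).trans ?_
  simp_rw [hslice, integral_max_one_sub_norm_sq]

end Ball

section Invariance

variable {E : Type*} [NormedAddCommGroup E] [InnerProductSpace ℝ E]

theorem eq_norm_mul_of_isometry_invariant {F : E → ℝ} (hF : ∀ (g : E ≃ₗᵢ[ℝ] E) p, F (g p) = F p)
    (hs : ∀ (c : ℝ) p, 0 ≤ c → F (c • p) = c * F p) {e : E} (he : ‖e‖ = 1) (p : E) :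
    F p = ‖p‖ * F e := by
  have h : ‖‖p‖ • e‖ = ‖p‖ := by simp [norm_smul, he]
  rw [← hs _ _ (norm_nonneg p), ← hF _ (‖p‖ • e), Submodule.reflection_sub h]

variable [MeasurableSpace E]

/-- Invariance of a measure under the whole orthogonal group of `E`. Reflections are included, which
makes the averages `∫ w, |⟪w, p⟫| ∂μ` depend on `p` through `‖p‖` only. -/
def IsIsometryInvariant (μ : Measure E) : Prop :=
  ∀ g : E ≃ₗᵢ[ℝ] E, MeasurePreserving g μ μ

namespace IsIsometryInvariant

variable [BorelSpace E] {μ ν : Measure E} {e : E}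

theorem integral_abs_inner_eq_norm_mul (hμ : IsIsometryInvariant μ) (he : ‖e‖ = 1) (p : E) :
    ∫ w, |inner ℝ w p| ∂μ = ‖p‖ * ∫ w, |inner ℝ w e| ∂μ := by
  refine eq_norm_mul_of_isometry_invariant (F := fun p => ∫ w, |inner ℝ w p| ∂μ)
    (fun g p => ?_) (fun c p hc => ?_) he p
  · rw [← (hμ g).integral_comp g.toHomeomorph.measurableEmbedding]
    simp_rw [g.inner_map_map]
  · simp_rw [real_inner_smul_right, abs_mul, abs_of_nonneg hc, integral_const_mul]

theorem integral_norm_mul_integral_abs_inner [SecondCountableTopology E] [SFinite μ] [SFinite ν]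
    (hμ : IsIsometryInvariant μ) (hν : IsIsometryInvariant ν) (hμi : Integrable (fun w => ‖w‖) μ)
    (hνi : Integrable (fun z => ‖z‖) ν) (he : ‖e‖ = 1) :
    (∫ w, ‖w‖ ∂μ) * ∫ z, |inner ℝ z e| ∂ν = (∫ z, ‖z‖ ∂ν) * ∫ w, |inner ℝ w e| ∂μ := by
  have hint : Integrable (Function.uncurry fun w z : E => |inner ℝ z w|) (μ.prod ν) := by
    refine (hμi.mul_prod hνi).mono' (by fun_prop) (.of_forall fun x => ?_)
    rw [Function.uncurry_def, Real.norm_eq_abs, abs_abs, mul_comm]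
    exact abs_real_inner_le_norm _ _
  calc (∫ w, ‖w‖ ∂μ) * ∫ z, |inner ℝ z e| ∂ν = ∫ w, ∫ z, |inner ℝ z w| ∂ν ∂μ := by
        rw [← integral_mul_const]
        exact integral_congr_ae (.of_forall fun w => (hν.integral_abs_inner_eq_norm_mul he w).symm)
    _ = ∫ z, ∫ w, |inner ℝ w z| ∂μ ∂ν := by
        rw [integral_integral_swap hint]
        simp_rw [real_inner_comm]
    _ = (∫ z, ‖z‖ ∂ν) * ∫ w, |inner ℝ w e| ∂μ := by
        rw [← integral_mul_const]
        exact integral_congr_ae (.of_forall fun z => hμ.integral_abs_inner_eq_norm_mul he z)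

end IsIsometryInvariant

variable [BorelSpace E] [FiniteDimensional ℝ E]

theorem isIsometryInvariant_restrict_closedBall :
    IsIsometryInvariant (volume.restrict (Metric.closedBall (0 : E) 1)) := fun g => by
  simpa using g.measurePreserving.restrict_preimage
    (Metric.isClosed_closedBall (x := (0 : E)) (ε := 1)).measurableSet

variable {V : Type*} [NormedAddCommGroup V] [InnerProductSpace ℝ V] [FiniteDimensional ℝ V]
  [Nontrivial V] [MeasurableSpace V] [BorelSpace V]

theorem setIntegral_closedBall_abs_inner
    (hVE : Module.finrank ℝ E = Module.finrank ℝ V + 1) {e : E} (he : ‖e‖ = 1) :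
    ∫ z in Metric.closedBall (0 : E) 1, |inner ℝ z e| =
      2 / (Module.finrank ℝ V + 2) * volume.real (Metric.closedBall (0 : V) 1) := by
  have hrank : Module.finrank ℝ (WithLp 2 (V × ℝ)) = Module.finrank ℝ E := by
    rw [(WithLp.linearEquiv 2 ℝ (V × ℝ)).finrank_eq, Module.finrank_prod, Module.finrank_self, hVE]
  let L : WithLp 2 (V × ℝ) ≃ₗᵢ[ℝ] E := (stdOrthonormalBasis ℝ (WithLp 2 (V × ℝ))).equiv
    (stdOrthonormalBasis ℝ E) (finCongr hrank)
  let e₀ : WithLp 2 (V × ℝ) := WithLp.toLp 2 (0, 1)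
  have he₀ : ‖L e₀‖ = 1 := by simp [e₀]
  have hinner (z : WithLp 2 (V × ℝ)) : inner ℝ (L z) (L e₀) = z.snd := by
    simp [e₀]
  rw [isIsometryInvariant_restrict_closedBall.integral_abs_inner_eq_norm_mul he₀ e, he, one_mul,
    ← L.measurePreserving.setIntegral_preimage_emb L.toHomeomorph.measurableEmbedding]
  simp_rw [hinner, L.preimage_closedBall, map_zero]
  exact setIntegral_closedBall_abs_snd

theorem IsIsometryInvariant.finrank_mul_volume_mul_integral_abs_inner
    (hVE : Module.finrank ℝ E = Module.finrank ℝ V + 1) {μ : Measure E} [SFinite μ]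
    (hμ : IsIsometryInvariant μ) (hμi : Integrable (fun w => ‖w‖) μ) {e : E} (he : ‖e‖ = 1) :
    Module.finrank ℝ E * volume.real (Metric.closedBall (0 : E) 1) * ∫ w, |inner ℝ w e| ∂μ =
      2 * volume.real (Metric.closedBall (0 : V) 1) * ∫ w, ‖w‖ ∂μ := by
  have : Nontrivial E := Module.nontrivial_of_finrank_pos (R := ℝ) (by omega)
  have hball : Integrable (fun z : E => ‖z‖) (volume.restrict (Metric.closedBall 0 1)) :=
    continuous_norm.continuousOn.integrableOn_compact (isCompact_closedBall 0 1)
  have hnorm := setIntegral_closedBall_norm_pow (volume : Measure E) 1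
  have hcompare := hμ.integral_norm_mul_integral_abs_inner isIsometryInvariant_restrict_closedBall
    hμi hball he
  simp only [pow_one] at hnorm
  rw [hnorm, setIntegral_closedBall_abs_inner hVE he, hVE] at hcompare
  rw [hVE]
  push_cast at hcompare ⊢
  field_simp at hcompare
  refine mul_left_cancel₀ (by positivity : (Module.finrank ℝ V + 2 : ℝ) ≠ 0) ?_
  linear_combination -hcompare

/-- The first intrinsic volume `d κ_d / κ_{d-1}` of the unit ball of `ℝ^d`, meaningful for `1 ≤ d`
because of the truncated subtraction. -/
noncomputable def unitBallV1 (d : ℕ) : ℝ :=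
  d * volume.real (Metric.closedBall (0 : EuclideanSpace ℝ (Fin d)) 1) /
    volume.real (Metric.closedBall (0 : EuclideanSpace ℝ (Fin (d - 1))) 1)

theorem volume_real_closedBall_pos : 0 < volume.real (Metric.closedBall (0 : E) 1) :=
  ENNReal.toReal_pos (Metric.measure_closedBall_pos _ _ one_pos).ne' measure_closedBall_lt_top.ne

theorem unitBallV1_pos {d : ℕ} (hd : d ≠ 0) : 0 < unitBallV1 d := by
  have := Nat.pos_of_ne_zero hd
  unfold unitBallV1
  have := volume_real_closedBall_pos (E := EuclideanSpace ℝ (Fin d))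
  have := volume_real_closedBall_pos (E := EuclideanSpace ℝ (Fin (d - 1)))
  positivity

theorem IsIsometryInvariant.integral_abs_inner_eq {d : ℕ} (hd : 2 ≤ d)
    {μ : Measure (EuclideanSpace ℝ (Fin d))} [SFinite μ] (hμ : IsIsometryInvariant μ)
    (hμi : Integrable (fun w => ‖w‖) μ) (p : EuclideanSpace ℝ (Fin d)) :
    ∫ w, |inner ℝ w p| ∂μ = 2 / unitBallV1 d * ‖p‖ * ∫ w, ‖w‖ ∂μ := by
  have : NeZero d := ⟨by omega⟩
  have : Nonempty (Fin (d - 1)) := ⟨⟨0, by omega⟩⟩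
  have he : ‖(EuclideanSpace.single 0 1 : EuclideanSpace ℝ (Fin d))‖ = 1 := by simp
  have hrank : Module.finrank ℝ (EuclideanSpace ℝ (Fin d)) =
      Module.finrank ℝ (EuclideanSpace ℝ (Fin (d - 1))) + 1 := by
    rw [finrank_euclideanSpace_fin, finrank_euclideanSpace_fin]
    omega
  have key := hμ.finrank_mul_volume_mul_integral_abs_inner hrank hμi he
  have hpos := volume_real_closedBall_pos (E := EuclideanSpace ℝ (Fin (d - 1)))
  have hpos' := volume_real_closedBall_pos (E := EuclideanSpace ℝ (Fin d))
  rw [finrank_euclideanSpace_fin] at key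
  rw [hμ.integral_abs_inner_eq_norm_mul he, unitBallV1]
  field_simp
  linear_combination ‖p‖ * key

end Invariance

section OrthogonalAverage

variable {E : Type*} [NormedAddCommGroup E] [InnerProductSpace ℝ E] [FiniteDimensional ℝ E]

instance compactSpace_unitary : CompactSpace (unitary (E →L[ℝ] E)) := by
  refine isCompact_iff_compactSpace.1 <| Metric.isCompact_of_isClosed_isBounded
    isClosed_unitary <| (Metric.isBounded_closedBall (x := 0) (r := 1)).subset fun g hg => ?_
  refine mem_closedBall_zero_iff.2 <| g.opNorm_le_bound zero_le_one fun x => ?_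
  rw [one_mul]
  exact (Unitary.norm_map ⟨g, hg⟩ x).le

variable (E) in
/-- The Haar probability measure on the orthogonal group of `E`, which is encoded as
`unitary (E →L[ℝ] E)` in order to be a topological group. -/
noncomputable def orthogonalHaar : Measure (unitary (E →L[ℝ] E)) :=
  Measure.haarMeasure ⊤

instance : (orthogonalHaar E).IsHaarMeasure := by
  unfold orthogonalHaar
  infer_instance

instance : IsProbabilityMeasure (orthogonalHaar E) :=
  ⟨Measure.haarMeasure_self⟩

theorem integrable_orthogonalHaar {f : unitary (E →L[ℝ] E) → ℝ} (hf : Continuous f) :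
    Integrable f (orthogonalHaar E) :=
  hf.integrable_of_hasCompactSupport (HasCompactSupport.of_compactSpace f)

theorem integral_orthogonalHaar_intervalIntegral_swap {f : ℝ → unitary (E →L[ℝ] E) → ℝ} {C : ℝ}
    (hf : Continuous (Function.uncurry f)) (hC : ∀ θ g, ‖f θ g‖ ≤ C) (a b : ℝ) :
    ∫ g, (∫ θ in a..b, f θ g) ∂orthogonalHaar E = ∫ θ in a..b, ∫ g, f θ g ∂orthogonalHaar E := by
  have : IsFiniteMeasure (volume.restrict (Set.uIoc a b)) :=
    inferInstanceAs (IsFiniteMeasure (volume.restrict (Set.Ioc _ _)))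
  exact (intervalIntegral_integral_swap <| Integrable.of_bound hf.aestronglyMeasurable C <|
    .of_forall fun x => hC x.1 x.2).symm

variable [MeasurableSpace E] [BorelSpace E]

/-- The distribution of `g u` for a Haar random orthogonal map `g`, that is, the uniform
distribution on the sphere of radius `‖u‖`. It is the isometry-invariant measure used to average
over rotations. -/
noncomputable def orbitMeasure (u : E) : Measure E :=
  (orthogonalHaar E).map fun g => g.1 u

instance (u : E) : IsFiniteMeasure (orbitMeasure u) := by
  unfold orbitMeasure
  infer_instance

theorem integral_orbitMeasure {f : E → ℝ} (hf : Continuous f) (u : E) :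
    ∫ w, f w ∂orbitMeasure u = ∫ g, f (g.1 u) ∂orthogonalHaar E := by
  have hu : Continuous fun g : unitary (E →L[ℝ] E) => g.1 u := by fun_prop
  exact integral_map hu.aemeasurable hf.aestronglyMeasurable

theorem integrable_orbitMeasure {f : E → ℝ} (hf : Continuous f) (u : E) :
    Integrable f (orbitMeasure u) := by
  have hu : Continuous fun g : unitary (E →L[ℝ] E) => g.1 u := by fun_prop
  exact (integrable_map_measure hf.aestronglyMeasurable hu.aemeasurable).2
    (integrable_orthogonalHaar (hf.comp hu))

theorem isIsometryInvariant_orbitMeasure (u : E) : IsIsometryInvariant (orbitMeasure u) := by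
  refine fun g => ⟨g.continuous.measurable, ?_⟩
  set k := Unitary.linearIsometryEquiv.symm g
  have hu : Continuous fun h : unitary (E →L[ℝ] E) => h.1 u := by fun_prop
  calc (orbitMeasure u).map g = (orthogonalHaar E).map fun h => (k * h).1 u := by
        rw [orbitMeasure, Measure.map_map g.continuous.measurable hu.measurable]
        rfl
    _ = ((orthogonalHaar E).map (k * ·)).map fun h => h.1 u :=
        (Measure.map_map hu.measurable (measurable_const_mul k)).symm
    _ = orbitMeasure u := by rw [map_mul_left_eq_self, orbitMeasure]

theorem integral_abs_inner_orthogonalHaar {d : ℕ} (hd : 2 ≤ d) (u p : EuclideanSpace ℝ (Fin d)) :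
    ∫ g, |inner ℝ (g.1 u) p| ∂orthogonalHaar (EuclideanSpace ℝ (Fin d)) =
      2 / unitBallV1 d * ‖p‖ * ‖u‖ := by
  have key := (isIsometryInvariant_orbitMeasure u).integral_abs_inner_eq hd
    (integrable_orbitMeasure continuous_norm u) p
  rw [integral_orbitMeasure (f := fun w => |inner ℝ w p|) (by fun_prop),
    integral_orbitMeasure continuous_norm] at key
  simpa only [Unitary.norm_map, integral_const, probReal_univ, one_smul] using key

variable {ι : Type*} [Fintype ι] {d : ℕ}

theorem integral_sum_abs_inner_orthogonalHaar (hd : 2 ≤ d) (p : ι → EuclideanSpace ℝ (Fin d))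
    (u : EuclideanSpace ℝ (Fin d)) :
    ∫ g, ∑ i, |inner ℝ (g.1 u) (p i)| ∂orthogonalHaar (EuclideanSpace ℝ (Fin d)) =
      2 / unitBallV1 d * ‖u‖ * ∑ i, ‖p i‖ := by
  rw [integral_finsetSum _ fun i _ => integrable_orthogonalHaar (by fun_prop), Finset.mul_sum]
  refine Finset.sum_congr rfl fun i _ => ?_
  rw [integral_abs_inner_orthogonalHaar hd]
  ring

theorem integral_circle_sum_abs_inner_orthogonalHaar (hd : 2 ≤ d)
    (p : ι → EuclideanSpace ℝ (Fin d)) {x y : EuclideanSpace ℝ (Fin d)} (hx : ‖x‖ = 1)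
    (hy : ‖y‖ = 1) (hxy : inner ℝ x y = 0) :
    ∫ g, (∫ θ in 0..Real.pi, ∑ i, |inner ℝ (Real.cos θ • g.1 x + Real.sin θ • g.1 y) (p i)|)
      ∂orthogonalHaar (EuclideanSpace ℝ (Fin d)) = 2 * Real.pi / unitBallV1 d * ∑ i, ‖p i‖ := by
  have hunit := norm_cos_smul_add_sin_smul hx hy hxy
  simp only [← map_smul, ← map_add]
  rw [integral_orthogonalHaar_intervalIntegral_swap (C := ∑ i, ‖p i‖) (by fun_prop) fun θ g => ?_]
  · simp_rw [integral_sum_abs_inner_orthogonalHaar hd, hunit]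
    rw [intervalIntegral.integral_const, sub_zero, smul_eq_mul]
    ring
  · rw [Real.norm_eq_abs, abs_of_nonneg (Finset.sum_nonneg fun i _ => abs_nonneg _)]
    refine Finset.sum_le_sum fun i _ => (abs_real_inner_le_norm _ _).trans_eq ?_
    rw [Unitary.norm_map, hunit, one_mul]

theorem sum_norm_le_of_sum_abs_inner_le [Nonempty ι] (hd : 2 ≤ d)
    {p : ι → EuclideanSpace ℝ (Fin d)} {M : ℝ} (hp : ∀ w, ∑ i, |inner ℝ w (p i)| ≤ M * ‖w‖) :
    ∑ i, ‖p i‖ ≤ unitBallV1 d *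
      (Fintype.card ι / Real.pi * Real.sin (Real.pi / (2 * Fintype.card ι)) * M) := by
  let x : EuclideanSpace ℝ (Fin d) := EuclideanSpace.single ⟨0, by omega⟩ 1
  let y : EuclideanSpace ℝ (Fin d) := EuclideanSpace.single ⟨1, by omega⟩ 1
  have hx : ‖x‖ = 1 := by simp [x]
  have hy : ‖y‖ = 1 := by simp [y]
  have hxy : inner ℝ x y = 0 := by simp [x, y, EuclideanSpace.inner_single_left]
  have hmean : 2 * Real.pi / unitBallV1 d * ∑ i, ‖p i‖ ≤
      2 * Fintype.card ι * Real.sin (Real.pi / (2 * Fintype.card ι)) * M := by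
    rw [← integral_circle_sum_abs_inner_orthogonalHaar hd p hx hy hxy]
    refine (integral_mono (integrable_orthogonalHaar ?_) (integrable_const _) fun g =>
      integral_sum_abs_inner_circle_le hp ((Unitary.norm_map g x).trans hx)
        ((Unitary.norm_map g y).trans hy) ((Unitary.inner_map_map g x y).trans hxy)).trans_eq ?_
    · exact intervalIntegral.continuous_parametric_intervalIntegral_of_continuous' (by fun_prop) _ _
    · rw [integral_const, probReal_univ, one_smul]
  have hV := unitBallV1_pos (d := d) (by omega)
  refine le_of_mul_le_mul_left (hmean.trans_eq ?_)
    (by positivity : 0 < 2 * Real.pi / unitBallV1 d)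
  field_simp

end OrthogonalAverage

section Zonotope

variable {E : Type*} [NormedAddCommGroup E] [InnerProductSpace ℝ E] {ι : Type*} [Fintype ι]

theorem sum_mem_sum_segment (p : ι → E) (S : Finset ι) :
    ∑ i ∈ S, p i ∈ ∑ i, segment ℝ (0 : E) (p i) := by
  classical
  rw [← Finset.univ_inter S, ← Finset.sum_ite_mem]
  refine Set.finsetSum_mem_finsetSum _ _ _ fun i _ => ?_
  split_ifs
  · exact right_mem_segment ℝ _ _
  · exact left_mem_segment ℝ _ _

theorem sum_abs_inner_le_of_sum_segment_subset_closedBall {p : ι → E} {c : E} {R : ℝ}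
    (h : (∑ i, segment ℝ (0 : E) (p i)) ⊆ Metric.closedBall c R) (w : E) :
    ∑ i, |inner ℝ w (p i)| ≤ 2 * R * ‖w‖ := by
  classical
  set S : Finset ι := {i | 0 ≤ inner ℝ w (p i)} with hS
  have hwidth : ∑ i, |inner ℝ w (p i)| = inner ℝ w (∑ i ∈ S, p i - ∑ i ∈ Sᶜ, p i) := by
    rw [inner_sub_right, inner_sum, inner_sum, ← Finset.sum_add_sum_compl S, sub_eq_add_neg,
      ← Finset.sum_neg_distrib]
    congr 1
    · exact Finset.sum_congr rfl fun i hi => abs_of_nonneg (Finset.mem_filter.1 hi).2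
    · exact Finset.sum_congr rfl fun i hi => abs_of_neg <| by simpa [hS] using hi
  have hdist : ‖∑ i ∈ S, p i - ∑ i ∈ Sᶜ, p i‖ ≤ 2 * R := by
    rw [← dist_eq_norm]
    linarith [dist_triangle_right (∑ i ∈ S, p i) (∑ i ∈ Sᶜ, p i) c,
      Metric.mem_closedBall.1 (h (sum_mem_sum_segment p S)),
      Metric.mem_closedBall.1 (h (sum_mem_sum_segment p Sᶜ))]
  calc ∑ i, |inner ℝ w (p i)| ≤ ‖w‖ * ‖∑ i ∈ S, p i - ∑ i ∈ Sᶜ, p i‖ :=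
        hwidth.trans_le (real_inner_le_norm _ _)
    _ ≤ 2 * R * ‖w‖ := by
        rw [mul_comm]
        gcongr

end Zonotope

theorem zonotope_V1_le_of_circumradius_le_one_general {ι : Type*} [Fintype ι] [Nonempty ι] {d : ℕ}
    (hd : 2 ≤ d) (p : ι → EuclideanSpace ℝ (Fin d))
    (hout : ∃ c : EuclideanSpace ℝ (Fin d),
      (∑ i, segment ℝ (0 : EuclideanSpace ℝ (Fin d)) (p i)) ⊆ Metric.closedBall c 1) :
    ∑ i, ‖p i‖ ≤ unitBallV1 d * (1 - Real.pi ^ 2 / (24 * (Fintype.card ι : ℝ) ^ 2) +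
      Real.pi ^ 4 / (1920 * (Fintype.card ι : ℝ) ^ 4)) := by
  obtain ⟨c, hc⟩ := hout
  have hV := unitBallV1_pos (d := d) (by omega)
  have hcard : (0 : ℝ) < Fintype.card ι := by exact_mod_cast Fintype.card_pos
  refine (sum_norm_le_of_sum_abs_inner_le hd
    (sum_abs_inner_le_of_sum_segment_subset_closedBall hc)).trans ?_
  gcongr
  refine Eq.trans_le ?_ (two_mul_div_pi_mul_sin_le hcard)
  ring

/-- Let `2 ≤ d ≤ n` and let `p₁, …, p_n ∈ ℝ^d` generate the zonotope
`Z = ∑ᵢ [0, pᵢ]`. If `Z` is contained in a translate of the closed Euclidean unit ball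
(circumradius at most `1`), then the first intrinsic volume `V₁(Z) = ∑ᵢ ‖pᵢ‖` satisfies
`∑ᵢ ‖pᵢ‖ ≤ (d κ_d / κ_{d-1}) (1 - π²/(24 n²) + π⁴/(1920 n⁴))`, i.e.
`1 - V₁(Z)/V₁(B^d) ≥ π²/(24 n²) - π⁴/(1920 n⁴)`. -/
theorem zonotope_V1_le_of_circumradius_le_one (d n : ℕ) (hd : 2 ≤ d) (hdn : d ≤ n)
    (p : Fin n → EuclideanSpace ℝ (Fin d))
    (hout : ∃ c : EuclideanSpace ℝ (Fin d),
      (∑ i : Fin n, segment ℝ (0 : EuclideanSpace ℝ (Fin d)) (p i)) ⊆ Metric.closedBall c 1) :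
    ∑ i, ‖p i‖ ≤
      (d : ℝ) * (volume (Metric.closedBall (0 : EuclideanSpace ℝ (Fin d)) 1)).toReal /
          (volume (Metric.closedBall (0 : EuclideanSpace ℝ (Fin (d - 1))) 1)).toReal *
        (1 - Real.pi ^ 2 / (24 * (n : ℝ) ^ 2) + Real.pi ^ 4 / (1920 * (n : ℝ) ^ 4)) := by
  have : NeZero n := ⟨by omega⟩
  simpa only [unitBallV1, measureReal_def, Fintype.card_fin] using
    zonotope_V1_le_of_circumradius_le_one_general hd p hout
end
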